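/- arXiv:2601.13818 — 6 statements merged into one kernel-verified Lean document; each statement's English description precedes it below -/
import Mathlib

section
/- (Stationary solution of the FrBD_{n+1}-GM model, Eqs. (18)–(19).) Consider the lumped FrBD_{n+1}-GM model with constant input v_r ∈ ℝ² and regularisation parameter ε > 0, and set g := M(v_r)² v_r / ‖M(v_r) v_r‖_{2,ε}. Then the point z* = −K₀⁻¹ g, f_i* = 0 (i = 1,…,n) is an equilibrium of the ODE system, i.e. the right-hand sides of all its equations vanish at (z*, f_1*, …, f_n*), and the corresponding stationary total bristle force equals f = K₀ z* + Σ_{i=1}^n f_i* = −M(v_r)² v_r / ‖M(v_r) v_r‖_{2,ε}. -/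
open Matrix

/-- The regularised Euclidean norm `‖y‖_{2,ε} = √(‖y‖₂² + ε)` on `ℝ²`. -/
noncomputable def regNorm (ε : ℝ) (y : Fin 2 → ℝ) : ℝ := Real.sqrt (y ⬝ᵥ y + ε)

/-- Stationary solution of the lumped FrBD_{n+1}-GM model (Eqs. (18)–(19)). -/
theorem frbd_gm_stationary_solution (n : ℕ)
    (K₀ : Matrix (Fin 2) (Fin 2) ℝ) (K C : Fin n → Matrix (Fin 2) (Fin 2) ℝ)
    (hK₀ : K₀.PosDef) (hK : ∀ i, (K i).PosDef) (hC : ∀ i, (C i).PosDef)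
    (M : (Fin 2 → ℝ) → Matrix (Fin 2) (Fin 2) ℝ) (hM : ∀ y, (M y).PosDef)
    (ε : ℝ) (hε : 0 < ε) (vr : Fin 2 → ℝ) :
    let g : Fin 2 → ℝ :=
      (regNorm ε ((M vr).mulVec vr))⁻¹ • ((M vr * M vr).mulVec vr)
    let zstar : Fin 2 → ℝ := -(K₀⁻¹.mulVec g)
    let fstar : Fin n → (Fin 2 → ℝ) := fun _ => 0
    let rhsz : Fin 2 → ℝ :=
      -(regNorm ε ((M vr).mulVec vr) •
        ((M vr * M vr)⁻¹.mulVec (K₀.mulVec zstar + ∑ i, fstar i))) - vr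
    -- the right-hand side of the bristle equation vanishes
    rhsz = 0 ∧
    -- the right-hand sides of the branch-force equations vanish
    (∀ i, -((C i * (K i)⁻¹)⁻¹.mulVec (fstar i)) + (K i).mulVec rhsz = 0) ∧
    -- the stationary total bristle force
    K₀.mulVec zstar + ∑ i, fstar i =
      -((regNorm ε ((M vr).mulVec vr))⁻¹ • ((M vr * M vr).mulVec vr)) := by
  intro g zstar fstar rhsz
  have hr : regNorm ε ((M vr).mulVec vr) ≠ 0 := by
    unfold regNorm
    refine (Real.sqrt_pos.mpr ?_).ne'
    have h : 0 ≤ (M vr).mulVec vr ⬝ᵥ (M vr).mulVec vr :=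
      Finset.sum_nonneg fun i _ => mul_self_nonneg _
    linarith
  have hK0 : IsUnit K₀.det := hK₀.det_pos.ne'.isUnit
  have hMM : IsUnit (M vr * M vr).det := by
    rw [Matrix.det_mul]
    exact (mul_ne_zero (hM vr).det_pos.ne' (hM vr).det_pos.ne').isUnit
  have hf : K₀.mulVec zstar + ∑ i, fstar i = -g := by
    simp only [zstar, fstar, Finset.sum_const_zero, add_zero, Matrix.mulVec_neg,
      Matrix.mulVec_mulVec, Matrix.mul_nonsing_inv _ hK0, Matrix.one_mulVec]
  have hz : rhsz = 0 := by
    simp only [rhsz]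
    rw [hf]
    simp only [g, Matrix.mulVec_neg, Matrix.mulVec_smul, Matrix.mulVec_mulVec,
      Matrix.nonsing_inv_mul _ hMM, Matrix.one_mulVec, smul_neg, neg_neg, smul_smul,
      mul_inv_cancel₀ hr, one_smul, sub_self]
  refine ⟨hz, fun i => ?_, hf⟩
  rw [hz]
  simp [fstar]
end

section
/- (Stationary solution of the FrBD_{n+1}-GKV model, Eqs. (18) and (20).) Consider the lumped FrBD_{n+1}-GKV model with constant input v_r ∈ ℝ² and regularisation parameter ε > 0, and set g := M(v_r)² v_r / ‖M(v_r) v_r‖_{2,ε}. Then the point z* = −Σ_{i=0}^n K_i⁻¹ g, z_i* = −K_i⁻¹ g (i = 1,…,n) is an equilibrium of the ODE system, i.e. the right-hand sides of all its equations vanish at (z*, z_1*, …, z_n*), and the corresponding stationary total bristle force equals f = K₀ (z* − Σ_{i=1}^n z_i*) = −M(v_r)² v_r / ‖M(v_r) v_r‖_{2,ε}. -/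
open Matrix

/-- Stationary solution of the lumped FrBD_{n+1}-GKV model (Eqs. (18) and (20)). -/
theorem frbd_gkv_stationary_solution (n : ℕ)
    (K₀ : Matrix (Fin 2) (Fin 2) ℝ) (K C : Fin n → Matrix (Fin 2) (Fin 2) ℝ)
    (hK₀ : K₀.PosDef) (hK : ∀ i, (K i).PosDef) (hC : ∀ i, (C i).PosDef)
    (M : (Fin 2 → ℝ) → Matrix (Fin 2) (Fin 2) ℝ) (hM : ∀ y, (M y).PosDef)
    (ε : ℝ) (hε : 0 < ε) (vr : Fin 2 → ℝ) :
    let g : Fin 2 → ℝ :=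
      (regNorm ε ((M vr).mulVec vr))⁻¹ • ((M vr * M vr).mulVec vr)
    let zstar : Fin 2 → ℝ := -(K₀⁻¹.mulVec g + ∑ i, (K i)⁻¹.mulVec g)
    let zistar : Fin n → (Fin 2 → ℝ) := fun i => -((K i)⁻¹.mulVec g)
    let rhsz : Fin 2 → ℝ :=
      -(regNorm ε ((M vr).mulVec vr) •
        ((M vr * M vr)⁻¹.mulVec (K₀.mulVec (zstar - ∑ i, zistar i)))) - vr
    -- the right-hand side of the bristle equation vanishes
    rhsz = 0 ∧
    -- the right-hand sides of the internal-deformation equations vanish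
    (∀ i, -(((C i)⁻¹ * K i).mulVec (zistar i)) +
        ((C i)⁻¹ * K₀).mulVec (zstar - ∑ j, zistar j) = 0) ∧
    -- the stationary total bristle force
    K₀.mulVec (zstar - ∑ i, zistar i) =
      -((regNorm ε ((M vr).mulVec vr))⁻¹ • ((M vr * M vr).mulVec vr)) := by
  intro g zstar zistar rhsz
  have hdet : ∀ A : Matrix (Fin 2) (Fin 2) ℝ, A.PosDef → IsUnit A.det :=
    fun A hA => hA.det_pos.ne'.isUnit
  have hr : regNorm ε ((M vr).mulVec vr) ≠ 0 := by
    have h : 0 ≤ (M vr).mulVec vr ⬝ᵥ (M vr).mulVec vr :=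
      Finset.sum_nonneg fun i _ => mul_self_nonneg _
    exact (Real.sqrt_pos.mpr (by linarith)).ne'
  have hd : zstar - ∑ i, zistar i = -(K₀⁻¹.mulVec g) := by
    simp only [zstar, zistar, Finset.sum_neg_distrib]
    abel
  have hf : K₀.mulVec (zstar - ∑ i, zistar i) = -g := by
    rw [hd, Matrix.mulVec_neg, Matrix.mulVec_mulVec, Matrix.mul_nonsing_inv _ (hdet _ hK₀),
      Matrix.one_mulVec]
  have hMM : IsUnit (M vr * M vr).det := by
    rw [Matrix.det_mul]
    exact (hdet _ (hM vr)).mul (hdet _ (hM vr))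
  refine ⟨?_, ?_, hf⟩
  · simp only [rhsz]
    rw [hf, Matrix.mulVec_neg]
    simp only [g]
    rw [Matrix.mulVec_smul, Matrix.mulVec_mulVec, Matrix.nonsing_inv_mul _ hMM,
      Matrix.one_mulVec, smul_neg, smul_smul, mul_inv_cancel₀ hr, one_smul, neg_neg, sub_self]
  · intro i
    rw [← Matrix.mulVec_mulVec, ← Matrix.mulVec_mulVec, hf]
    simp only [zistar]
    rw [Matrix.mulVec_neg _ (K i), Matrix.mulVec_mulVec g (K i),
      Matrix.mul_nonsing_inv _ (hdet _ (hK i)), Matrix.one_mulVec, neg_add_cancel]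
end

section
/- (Passivity of the lumped FrBD_{n+1}-GM model.) Let ε ≥ 0, let v_r : [0,T] → ℝ² be continuous, and let z, f_1, …, f_n : [0,T] → ℝ² be differentiable functions satisfying the lumped FrBD_{n+1}-GM ODE system on (0,T). Define the storage function W(t) := ½ z(t)ᵀ K₀ z(t) + ½ Σ_{i=1}^n f_i(t)ᵀ K_i⁻¹ f_i(t) and the total force f := K₀ z + Σ_{i=1}^n f_i. Then W is differentiable on (0,T) with W′(t) ≤ −f(t)ᵀ v_r(t) for every t ∈ (0,T); consequently W(t) − W(0) ≤ ∫₀ᵗ (−f(t′)ᵀ v_r(t′)) dt′ for all t ∈ [0,T]. -/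
open Matrix MeasureTheory

/-- The right-hand side of the bristle equation of the lumped FrBD models:
`ż = −M(v_r)⁻² ‖M(v_r) v_r‖_{2,ε} F − v_r`, where `F` is the total bristle force. -/
noncomputable def zRhs (M : (Fin 2 → ℝ) → Matrix (Fin 2) (Fin 2) ℝ) (ε : ℝ)
    (vr F : Fin 2 → ℝ) : Fin 2 → ℝ :=
  -(regNorm ε ((M vr).mulVec vr) • ((M vr * M vr)⁻¹.mulVec F)) - vr

theorem quad_hasDerivAt (A : Matrix (Fin 2) (Fin 2) ℝ) (hA : A.PosDef)
    (g : ℝ → (Fin 2 → ℝ)) (g' : Fin 2 → ℝ) (t : ℝ) (h : HasDerivAt g g' t) :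
    HasDerivAt (fun s => (g s ⬝ᵥ A.mulVec (g s))) (2 * (g t ⬝ᵥ A.mulVec g')) t := by
  have h0 := (hasDerivAt_pi.1 h) 0
  have h1 := (hasDerivAt_pi.1 h) 1
  have hs : A 1 0 = A 0 1 := by simpa using hA.isHermitian.apply 0 1
  simp only [dotProduct, mulVec, Fin.sum_univ_two]
  refine ((h0.mul ((h0.const_mul (A 0 0)).add (h1.const_mul (A 0 1)))).add
    (h1.mul ((h0.const_mul (A 1 0)).add (h1.const_mul (A 1 1))))).congr_deriv ?_
  simp only [hs, Pi.add_apply]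
  ring

theorem quad_continuousOn (A : Matrix (Fin 2) (Fin 2) ℝ) (S : Set ℝ)
    (g : ℝ → (Fin 2 → ℝ)) (h : ContinuousOn g S) :
    ContinuousOn (fun s => (g s ⬝ᵥ A.mulVec (g s))) S := by
  have h0 := (continuousOn_pi.1 h) 0
  have h1 := (continuousOn_pi.1 h) 1
  simp only [dotProduct, mulVec, Fin.sum_univ_two]
  fun_prop

theorem posDef_nonneg (A : Matrix (Fin 2) (Fin 2) ℝ) (hA : A.PosDef) (x : Fin 2 → ℝ) :
    0 ≤ x ⬝ᵥ A.mulVec x := by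
  simpa using hA.posSemidef.dotProduct_mulVec_nonneg x

theorem sq_posDef (A : Matrix (Fin 2) (Fin 2) ℝ) (hA : A.PosDef) : (A * A)⁻¹.PosDef := by
  have hh : Aᴴ = A := hA.isHermitian
  have : (Aᴴ * A).PosDef := by
    refine Matrix.PosDef.conjTranspose_mul_self A ?_
    exact Matrix.mulVec_injective_of_isUnit hA.isUnit
  rw [hh] at this
  exact this.inv

/-- Passivity of the lumped FrBD_{n+1}-GM model. -/
theorem frbd_gm_lumped_passivity (n : ℕ)
    (K₀ : Matrix (Fin 2) (Fin 2) ℝ) (K C : Fin n → Matrix (Fin 2) (Fin 2) ℝ)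
    (hK₀ : K₀.PosDef) (hK : ∀ i, (K i).PosDef) (hC : ∀ i, (C i).PosDef)
    (M : (Fin 2 → ℝ) → Matrix (Fin 2) (Fin 2) ℝ) (hM : ∀ y, (M y).PosDef)
    (ε : ℝ) (hε : 0 ≤ ε) (T : ℝ) (hT : 0 < T)
    (vr : ℝ → (Fin 2 → ℝ)) (hvr : ContinuousOn vr (Set.Icc 0 T))
    (z : ℝ → (Fin 2 → ℝ)) (f : Fin n → ℝ → (Fin 2 → ℝ))
    (hzdiff : DifferentiableOn ℝ z (Set.Icc 0 T))
    (hfdiff : ∀ i, DifferentiableOn ℝ (f i) (Set.Icc 0 T))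
    (hz : ∀ t ∈ Set.Ioo 0 T,
      HasDerivAt z (zRhs M ε (vr t) (K₀.mulVec (z t) + ∑ i, f i t)) t)
    (hf : ∀ i, ∀ t ∈ Set.Ioo 0 T,
      HasDerivAt (f i)
        (-((C i * (K i)⁻¹)⁻¹.mulVec (f i t)) +
          (K i).mulVec (zRhs M ε (vr t) (K₀.mulVec (z t) + ∑ i, f i t))) t) :
    let W : ℝ → ℝ := fun t =>
      (1/2) * (z t ⬝ᵥ K₀.mulVec (z t)) +
      (1/2) * ∑ i, f i t ⬝ᵥ (K i)⁻¹.mulVec (f i t)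
    (∀ t ∈ Set.Ioo 0 T, ∃ w : ℝ, HasDerivAt W w t ∧
        w ≤ -((K₀.mulVec (z t) + ∑ i, f i t) ⬝ᵥ vr t)) ∧
    (∀ t ∈ Set.Icc 0 T,
      W t - W 0 ≤ ∫ t' in (0:ℝ)..t, -((K₀.mulVec (z t') + ∑ i, f i t') ⬝ᵥ vr t')) := by
  intro W
  have h1 : ∀ t ∈ Set.Ioo 0 T, ∃ w : ℝ, HasDerivAt W w t ∧
        w ≤ -((K₀.mulVec (z t) + ∑ i, f i t) ⬝ᵥ vr t) := by
    intro t ht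
    have hz' := hz t ht
    have hf' := fun i => hf i t ht
    set F := K₀.mulVec (z t) + ∑ i, f i t with hF
    set d := zRhs M ε (vr t) F with hd
    refine ⟨_, ((quad_hasDerivAt K₀ hK₀ z d t hz').const_mul (1/2)).add
      ((HasDerivAt.fun_sum (u := Finset.univ) fun i _ =>
        quad_hasDerivAt _ (hK i).inv (f i) _ t (hf' i)).const_mul (1/2)), ?_⟩
    have e1 : ∀ i, f i t ⬝ᵥ (K i)⁻¹.mulVec
        (-((C i * (K i)⁻¹)⁻¹.mulVec (f i t)) + (K i).mulVec d)
        = f i t ⬝ᵥ d - f i t ⬝ᵥ (C i)⁻¹.mulVec (f i t) := by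
      intro i
      have hu : IsUnit (K i).det := (Matrix.isUnit_iff_isUnit_det _).1 (hK i).isUnit
      rw [Matrix.mulVec_add, Matrix.mulVec_neg, Matrix.mulVec_mulVec, Matrix.mulVec_mulVec,
        Matrix.mul_inv_rev, Matrix.nonsing_inv_nonsing_inv _ hu, ← Matrix.mul_assoc,
        Matrix.nonsing_inv_mul _ hu, Matrix.one_mul, Matrix.one_mulVec, dotProduct_add,
        dotProduct_neg]
      ring
    have e2 : z t ⬝ᵥ K₀.mulVec d = K₀.mulVec (z t) ⬝ᵥ d := by
      have hs : K₀ 1 0 = K₀ 0 1 := by simpa using hK₀.isHermitian.apply 0 1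
      simp only [dotProduct, mulVec, Fin.sum_univ_two, hs]
      ring
    have e3 : F ⬝ᵥ d = K₀.mulVec (z t) ⬝ᵥ d + ∑ i, f i t ⬝ᵥ d := by
      rw [hF, add_dotProduct, sum_dotProduct]
    have e4 : F ⬝ᵥ d = -(regNorm ε ((M (vr t)).mulVec (vr t)) *
        (F ⬝ᵥ (M (vr t) * M (vr t))⁻¹.mulVec F)) - F ⬝ᵥ vr t := by
      rw [hd, zRhs, dotProduct_sub, dotProduct_neg, dotProduct_smul, smul_eq_mul]
    have p1 : 0 ≤ regNorm ε ((M (vr t)).mulVec (vr t)) *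
        (F ⬝ᵥ (M (vr t) * M (vr t))⁻¹.mulVec F) :=
      mul_nonneg (Real.sqrt_nonneg _) (posDef_nonneg _ (sq_posDef _ (hM _)) _)
    have p2 : 0 ≤ ∑ i, f i t ⬝ᵥ (C i)⁻¹.mulVec (f i t) :=
      Finset.sum_nonneg fun i _ => posDef_nonneg _ (hC i).inv _
    simp only [e1, e2]
    rw [← Finset.mul_sum, Finset.sum_sub_distrib]
    linarith
  refine ⟨h1, ?_⟩
  have hzc := hzdiff.continuousOn
  have hfc := fun i => (hfdiff i).continuousOn
  have hW : ContinuousOn W (Set.Icc 0 T) :=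
    (continuousOn_const.mul (quad_continuousOn K₀ _ z hzc)).add
      (continuousOn_const.mul (continuousOn_finsetSum _ fun i _ =>
        quad_continuousOn _ _ (f i) (hfc i)))
  have hφ : ContinuousOn (fun t' => -((K₀.mulVec (z t') + ∑ i, f i t') ⬝ᵥ vr t'))
      (Set.Icc 0 T) := by
    have z0 := fun j => (continuousOn_pi.1 hzc) j
    have v0 := fun j => (continuousOn_pi.1 hvr) j
    have f0 := fun i j => (continuousOn_pi.1 (hfc i)) j
    simp only [dotProduct, mulVec, Fin.sum_univ_two, Pi.add_apply, Finset.sum_apply]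
    fun_prop
  choose! w hw using h1
  intro t ht
  have hsub : Set.Icc 0 t ⊆ Set.Icc 0 T := Set.Icc_subset_Icc_right ht.2
  have hsub' : Set.Ioo 0 t ⊆ Set.Ioo 0 T := Set.Ioo_subset_Ioo_right ht.2
  exact intervalIntegral.sub_le_integral_of_hasDeriv_right_of_le ht.1 (hW.mono hsub)
    (fun x hx => (hw x (hsub' hx)).1.hasDerivWithinAt)
    ((hφ.mono hsub).integrableOn_Icc) (fun x hx => (hw x (hsub' hx)).2)
end

section
/- (Passivity of the lumped FrBD_{n+1}-GKV model.) Let ε ≥ 0, let v_r : [0,T] → ℝ² be continuous, and let z, z_1, …, z_n : [0,T] → ℝ² be differentiable functions satisfying the lumped FrBD_{n+1}-GKV ODE system on (0,T). Define z₀ := z − Σ_{i=1}^n z_i, the storage function W(t) := ½ z₀(t)ᵀ K₀ z₀(t) + ½ Σ_{i=1}^n z_i(t)ᵀ K_i z_i(t), and the total force f := K₀ z₀. Then W is differentiable on (0,T) with W′(t) ≤ −f(t)ᵀ v_r(t) for every t ∈ (0,T); consequently W(t) − W(0) ≤ ∫₀ᵗ (−f(t′)ᵀ v_r(t′)) dt′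 for all t ∈ [0,T]. -/
open Matrix MeasureTheory

theorem hasDerivAt_quad_aux (K : Matrix (Fin 2) (Fin 2) ℝ) (hK : K.PosDef)
    (u : ℝ → (Fin 2 → ℝ)) (u' : Fin 2 → ℝ) (t : ℝ) (hu : HasDerivAt u u' t) :
    HasDerivAt (fun s => u s ⬝ᵥ K.mulVec (u s)) (2 * (K.mulVec (u t) ⬝ᵥ u')) t := by
  have h := hasDerivAt_pi.1 hu
  have h0 := h 0
  have h1 := h 1
  have hs : K 1 0 = K 0 1 := by
    have := hK.isHermitian.apply 0 1
    simpa using this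
  simp only [dotProduct, Matrix.mulVec, Fin.sum_univ_two]
  refine ((h0.mul ((h0.const_mul (K 0 0)).add (h1.const_mul (K 0 1)))).add
    (h1.mul ((h0.const_mul (K 1 0)).add (h1.const_mul (K 1 1))))).congr_deriv ?_
  simp only [Pi.add_apply, hs]
  ring

theorem posSemidef_dot_aux (A : Matrix (Fin 2) (Fin 2) ℝ) (hA : A.PosSemidef)
    (x : Fin 2 → ℝ) : 0 ≤ x ⬝ᵥ A.mulVec x := by
  simpa using hA.dotProduct_mulVec_nonneg x

/-- Passivity of the lumped FrBD_{n+1}-GKV model. -/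
theorem frbd_gkv_lumped_passivity (n : ℕ)
    (K₀ : Matrix (Fin 2) (Fin 2) ℝ) (K C : Fin n → Matrix (Fin 2) (Fin 2) ℝ)
    (hK₀ : K₀.PosDef) (hK : ∀ i, (K i).PosDef) (hC : ∀ i, (C i).PosDef)
    (M : (Fin 2 → ℝ) → Matrix (Fin 2) (Fin 2) ℝ) (hM : ∀ y, (M y).PosDef)
    (ε : ℝ) (hε : 0 ≤ ε) (T : ℝ) (hT : 0 < T)
    (vr : ℝ → (Fin 2 → ℝ)) (hvr : ContinuousOn vr (Set.Icc 0 T))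
    (z : ℝ → (Fin 2 → ℝ)) (zi : Fin n → ℝ → (Fin 2 → ℝ))
    (hzdiff : DifferentiableOn ℝ z (Set.Icc 0 T))
    (hzidiff : ∀ i, DifferentiableOn ℝ (zi i) (Set.Icc 0 T))
    (hz : ∀ t ∈ Set.Ioo 0 T,
      HasDerivAt z (zRhs M ε (vr t) (K₀.mulVec (z t - ∑ i, zi i t))) t)
    (hzi : ∀ i, ∀ t ∈ Set.Ioo 0 T,
      HasDerivAt (zi i)
        (-(((C i)⁻¹ * K i).mulVec (zi i t)) +
          ((C i)⁻¹ * K₀).mulVec (z t - ∑ j, zi j t)) t) :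
    let z₀ : ℝ → (Fin 2 → ℝ) := fun t => z t - ∑ i, zi i t
    let W : ℝ → ℝ := fun t =>
      (1/2) * (z₀ t ⬝ᵥ K₀.mulVec (z₀ t)) +
      (1/2) * ∑ i, zi i t ⬝ᵥ (K i).mulVec (zi i t)
    (∀ t ∈ Set.Ioo 0 T, ∃ w : ℝ, HasDerivAt W w t ∧
        w ≤ -(K₀.mulVec (z₀ t) ⬝ᵥ vr t)) ∧
    (∀ t ∈ Set.Icc 0 T,
      W t - W 0 ≤ ∫ t' in (0:ℝ)..t, -(K₀.mulVec (z₀ t') ⬝ᵥ vr t')) := by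
  intro z₀ W
  have hder : ∀ t ∈ Set.Ioo 0 T, ∃ w : ℝ, HasDerivAt W w t ∧
        w ≤ -(K₀.mulVec (z₀ t) ⬝ᵥ vr t) := by
    intro t ht
    have hsum := HasDerivAt.fun_sum (u := Finset.univ) (fun i _ => hzi i t ht)
    have hz0 := (hz t ht).fun_sub hsum
    have hW := ((hasDerivAt_quad_aux K₀ hK₀ z₀ _ t hz0).const_mul (1/2)).fun_add
      ((HasDerivAt.fun_sum (u := Finset.univ)
        (fun i _ => hasDerivAt_quad_aux (K i) (hK i) (zi i) _ t (hzi i t ht))).const_mul (1/2))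
    refine ⟨_, hW, ?_⟩
    have e0 : z t - ∑ i, zi i t = z₀ t := rfl
    simp only [e0]
    set f := K₀.mulVec (z₀ t) with hf
    have e1 : ∀ i, -(((C i)⁻¹ * K i).mulVec (zi i t)) + ((C i)⁻¹ * K₀).mulVec (z₀ t)
        = (C i)⁻¹.mulVec (f - (K i).mulVec (zi i t)) := by
      intro i
      rw [Matrix.mulVec_sub (C i)⁻¹ f, hf, Matrix.mulVec_mulVec, Matrix.mulVec_mulVec]
      abel
    simp only [e1]
    have hd : ∀ i, 0 ≤ (f - (K i).mulVec (zi i t)) ⬝ᵥ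
        (C i)⁻¹.mulVec (f - (K i).mulVec (zi i t)) := fun i =>
      posSemidef_dot_aux _ (hC i).inv.posSemidef _
    have hd' := Finset.sum_nonneg (fun i (_ : i ∈ Finset.univ) => hd i)
    simp only [sub_dotProduct (_ : Fin 2 → ℝ) _ ((C _)⁻¹.mulVec _), Finset.sum_sub_distrib] at hd'
    have hMM : (M (vr t) * M (vr t)).PosSemidef := by
      have := Matrix.posSemidef_conjTranspose_mul_self (M (vr t))
      rwa [(hM (vr t)).isHermitian.eq] at this
    have hm := mul_nonneg (Real.sqrt_nonneg ((M (vr t)).mulVec (vr t) ⬝ᵥ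
      (M (vr t)).mulVec (vr t) + ε)) (posSemidef_dot_aux _ hMM.inv f)
    rw [dotProduct_sub, dotProduct_sum, ← Finset.mul_sum]
    simp only [zRhs, regNorm, dotProduct_sub f _ (vr t), dotProduct_neg, dotProduct_smul,
      smul_eq_mul]
    linarith
  refine ⟨hder, ?_⟩
  have hzic : ∀ i, ContinuousOn (zi i) (Set.Icc 0 T) := fun i => (hzidiff i).continuousOn
  have hz0c : ContinuousOn z₀ (Set.Icc 0 T) :=
    hzdiff.continuousOn.sub (continuousOn_finsetSum _ fun i _ => hzic i)
  have hq : ∀ (A : Matrix (Fin 2) (Fin 2) ℝ) (u v : ℝ → (Fin 2 → ℝ)),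
      ContinuousOn u (Set.Icc 0 T) → ContinuousOn v (Set.Icc 0 T) →
      ContinuousOn (fun s => A.mulVec (u s) ⬝ᵥ v s) (Set.Icc 0 T) := by
    intro A u v hu hv
    have hu' := continuousOn_pi.1 hu
    have hv' := continuousOn_pi.1 hv
    have a := hu' 0
    have b := hu' 1
    have c := hv' 0
    have d := hv' 1
    simp only [dotProduct, Matrix.mulVec, Fin.sum_univ_two]
    fun_prop
  have hWc : ContinuousOn W (Set.Icc 0 T) := by
    simp only [W, dotProduct_comm _ (Matrix.mulVec _ _)]
    exact (continuousOn_const.mul (hq _ _ _ hz0c hz0c)).add (continuousOn_const.mul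
      (continuousOn_finsetSum _ fun i _ => hq _ _ _ (hzic i) (hzic i)))
  have hgc : ContinuousOn (fun s => -(K₀.mulVec (z₀ s) ⬝ᵥ vr s)) (Set.Icc 0 T) :=
    (hq _ _ _ hz0c hvr).neg
  intro t ht
  have hsub : Set.Icc 0 t ⊆ Set.Icc 0 T := Set.Icc_subset_Icc_right ht.2
  have hderiv : ∀ x ∈ Set.Ioo 0 t, HasDerivAt W (deriv W x) x ∧
      deriv W x ≤ -(K₀.mulVec (z₀ x) ⬝ᵥ vr x) := by
    intro x hx
    obtain ⟨w, h1, h2⟩ := hder x ⟨hx.1, hx.2.trans_le ht.2⟩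
    rw [h1.deriv]
    exact ⟨h1, h2⟩
  exact intervalIntegral.sub_le_integral_of_hasDeriv_right_of_le ht.1 (hWc.mono hsub)
    (fun x hx => (hderiv x hx).1.hasDerivWithinAt) (hgc.mono hsub).integrableOn_Icc
    (fun x hx => (hderiv x hx).2)
end

section
/- (Lemma 5.1: passivity of the standard linear FrBD_{n+1}-GM model on a rectangular contact area.) Let a, b, S > 0 and let 𝒞 = [−a, a] × [−b, b]. Let p : ℝ² → ℝ be continuously differentiable with p ≥ 0 and ∂p/∂x ≥ 0 on 𝒞 (so that ∇·(p V̄) ≤ 0 for the transport field V̄ = (−1, 0), condition (56)). Let ε ≥ 0, let v̄ : 𝒞 × [0, S] → ℝ² be continuous, V_r : [0, S] → ℝ continuous with V_r(s) ≥ V_min for some V_min > 0, and let M be continuous with symmetric positive definite values. Suppose z, f_1, …, f_n : 𝒞 × [0, S] → ℝ² are continuously differentiable, satisfy the standard linear FrBD_{n+1}-GM equations at every interior point, and satisfy the leading-edge boundary condition z(a, y, s) = 0 and f_i(a, y, s) = 0 for all y ∈ [−b, b], s ∈ [0, S], i = 1,…,n. Define the storage function W(s) := ½ ∬_𝒞 p(x,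 y) ( z(x,y,s)ᵀ K₀ z(x,y,s) + Σ_{i=1}^n f_i(x,y,s)ᵀ K_i⁻¹ f_i(x,y,s) ) dx dy and the total force f := K₀ z + Σ_{i=1}^n f_i. Then for every s ∈ [0, S], W(s) − W(0) ≤ ∫₀ˢ ( −∬_𝒞 p(x, y) f(x,y,s′)ᵀ v̄(x,y,s′) dx dy ) ds′. -/
open Matrix MeasureTheory

lemma fgm_slice (G h : ℝ × ℝ → ℝ) (a T : ℝ) (ha : 0 < a) (hT : 0 < T)
    (hG : ContDiffOn ℝ 1 G (Set.Icc (-a) a ×ˢ Set.Icc 0 T))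
    (hh : ContinuousOn h (Set.Icc (-a) a ×ˢ Set.Icc 0 T))
    (hD : ∀ x ∈ Set.Ioo (-a) a, ∀ s ∈ Set.Ioo 0 T, ∃ Gx Gs : ℝ,
      HasDerivAt (fun x' => G (x', s)) Gx x ∧ HasDerivAt (fun s' => G (x, s')) Gs s ∧
        Gs - Gx ≤ h (x, s))
    (hBa : ∀ s ∈ Set.Icc 0 T, G (a, s) = 0) (hBm : ∀ s ∈ Set.Icc 0 T, 0 ≤ G (-a, s)) :
    (∫ x in Set.Icc (-a) a, G (x, T)) - (∫ x in Set.Icc (-a) a, G (x, 0)) ≤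
      ∫ x in Set.Icc (-a) a, ∫ s in Set.Icc 0 T, h (x, s) := by
  set R : Set (ℝ × ℝ) := Set.Icc (-a) a ×ˢ Set.Icc 0 T with hR
  have haa : -a < a := by linarith
  have hU : UniqueDiffOn ℝ R := (uniqueDiffOn_Icc haa).prod (uniqueDiffOn_Icc hT)
  have hRI : R = Set.Icc ((-a, 0) : ℝ × ℝ) (a, T) := by rw [hR, Set.Icc_prod_eq]
  have hRc : IsCompact R := isCompact_Icc.prod isCompact_Icc
  have hcG := hG.continuousOn
  have hcD := hG.continuousOn_fderivWithin hU le_rfl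
  have hFD : ∀ q ∈ Set.Ioo (-a) a ×ˢ Set.Ioo 0 T, HasFDerivAt G (fderivWithin ℝ G R q) q := by
    intro q hq
    have hn : R ∈ nhds q := by
      refine Filter.mem_of_superset ((isOpen_Ioo.prod isOpen_Ioo).mem_nhds hq) ?_
      exact Set.prod_mono Set.Ioo_subset_Icc_self Set.Ioo_subset_Icc_self
    exact ((hG.differentiableOn one_ne_zero q (mem_of_mem_nhds hn)).hasFDerivWithinAt).hasFDerivAt hn
  have hcd : ContinuousOn (fun q => (-(fderivWithin ℝ G R q)) (1, 0) +
      (fderivWithin ℝ G R q) (0, 1)) R :=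
    (hcD.neg.clm_apply continuousOn_const).add (hcD.clm_apply continuousOn_const)
  have key := integral_divergence_prod_Icc_of_hasFDerivAt_off_countable_of_le
    (fun q => - G q) G (fun q => -(fderivWithin ℝ G R q)) (fun q => fderivWithin ℝ G R q)
    (-a, 0) (a, T) ⟨haa.le, hT.le⟩ ∅ Set.countable_empty (by rw [← hRI]; exact hcG.neg)
    (by rw [← hRI]; exact hcG) (fun q hq => (hFD q hq.1).neg) (fun q hq => hFD q hq.1)
    (by rw [← hRI]; exact hcd.integrableOn_compact hRc)
  rw [← hRI] at key
  simp only at key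
  have hae : (Set.Ioo (-a) a ×ˢ Set.Ioo 0 T : Set (ℝ × ℝ)) =ᵐ[volume] R :=
    Measure.set_prod_ae_eq Ioo_ae_eq_Icc Ioo_ae_eq_Icc
  have hsub : (Set.Ioo (-a) a ×ˢ Set.Ioo 0 T : Set (ℝ × ℝ)) ⊆ R :=
    Set.prod_mono Set.Ioo_subset_Icc_self Set.Ioo_subset_Icc_self
  have hle : (∫ q in R, ((-(fderivWithin ℝ G R q)) (1, 0) + (fderivWithin ℝ G R q) (0, 1)))
      ≤ ∫ q in R, h q := by
    rw [← setIntegral_congr_set hae, ← setIntegral_congr_set hae]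
    refine setIntegral_mono_on ((hcd.integrableOn_compact hRc).mono_set hsub)
      ((hh.integrableOn_compact hRc).mono_set hsub) (measurableSet_Ioo.prod measurableSet_Ioo) ?_
    rintro ⟨x, s⟩ hq
    obtain ⟨Gx, Gs, h1, h2, h3⟩ := hD x hq.1 s hq.2
    have e1 : HasDerivAt (fun x' => G (x', s)) (fderivWithin ℝ G R (x, s) (1, 0)) x :=
      (hFD _ hq).comp_hasDerivAt x ((hasDerivAt_id x).prodMk (hasDerivAt_const x s))
    have e2 : HasDerivAt (fun s' => G (x, s')) (fderivWithin ℝ G R (x, s) (0, 1)) s :=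
      (hFD _ hq).comp_hasDerivAt s ((hasDerivAt_const s x).prodMk (hasDerivAt_id s))
    have := h1.unique e1
    have := h2.unique e2
    simp only [ContinuousLinearMap.neg_apply]
    linarith
  have hb1 : (∫ s in (0:ℝ)..T, -G (a, s)) = 0 := by
    rw [intervalIntegral.integral_congr (g := fun _ => (0:ℝ))]
    · simp
    · intro s hs
      rw [Set.uIcc_of_le hT.le] at hs
      simp [hBa s hs]
  have hb2 : (∫ s in (0:ℝ)..T, -G (-a, s)) ≤ 0 := by
    rw [intervalIntegral.integral_neg]
    have := intervalIntegral.integral_nonneg (μ := volume) hT.le hBm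
    linarith
  have hfub : (∫ q in R, h q) = ∫ x in Set.Icc (-a) a, ∫ s in Set.Icc 0 T, h (x, s) :=
    setIntegral_prod h (hh.integrableOn_compact hRc)
  rw [intervalIntegral.integral_of_le haa.le, intervalIntegral.integral_of_le haa.le,
    ← integral_Icc_eq_integral_Ioc, ← integral_Icc_eq_integral_Ioc] at key
  linarith

lemma fgm_box (E h : ℝ → ℝ → ℝ → ℝ) (a b S : ℝ) (ha : 0 < a)
    (hE : ContDiffOn ℝ 1 (fun q : ℝ × ℝ × ℝ => E q.1 q.2.1 q.2.2)
      (Set.Icc (-a) a ×ˢ Set.Icc (-b) b ×ˢ Set.Icc 0 S))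
    (hh : ContinuousOn (fun q : (ℝ × ℝ) × ℝ => h q.1.1 q.1.2 q.2)
      ((Set.Icc (-a) a ×ˢ Set.Icc (-b) b) ×ˢ Set.Icc 0 S))
    (hD : ∀ x ∈ Set.Ioo (-a) a, ∀ y ∈ Set.Ioo (-b) b, ∀ s ∈ Set.Ioo 0 S, ∃ Ex Es : ℝ,
      HasDerivAt (fun x' => E x' y s) Ex x ∧ HasDerivAt (fun s' => E x y s') Es s ∧
        Es - Ex ≤ h x y s)
    (hBa : ∀ y ∈ Set.Icc (-b) b, ∀ s ∈ Set.Icc 0 S, E a y s = 0)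
    (hBm : ∀ y ∈ Set.Icc (-b) b, ∀ s ∈ Set.Icc 0 S, 0 ≤ E (-a) y s)
    (T : ℝ) (hT : T ∈ Set.Icc 0 S) :
    (∫ q in Set.Icc (-a) a ×ˢ Set.Icc (-b) b, E q.1 q.2 T) -
      (∫ q in Set.Icc (-a) a ×ˢ Set.Icc (-b) b, E q.1 q.2 0) ≤
      ∫ s in (0:ℝ)..T, ∫ q in Set.Icc (-a) a ×ˢ Set.Icc (-b) b, h q.1 q.2 s := by
  rcases hT.1.eq_or_lt with h0 | h0
  · subst h0; simp
  set Q : Set (ℝ × ℝ) := Set.Icc (-a) a ×ˢ Set.Icc (-b) b with hQ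
  have hQc : IsCompact Q := isCompact_Icc.prod isCompact_Icc
  have hTS : Set.Icc 0 T ⊆ Set.Icc 0 S := Set.Icc_subset_Icc le_rfl hT.2
  have hcE : ∀ s ∈ Set.Icc 0 S, ContinuousOn (fun q : ℝ × ℝ => E q.1 q.2 s) Q := by
    intro s hs
    refine hE.continuousOn.comp (f := fun q : ℝ × ℝ => (q.1, q.2, s)) (by fun_prop) ?_
    intro q hq
    exact ⟨hq.1, hq.2, hs⟩
  have hiE : ∀ s ∈ Set.Icc 0 S, IntegrableOn (fun q : ℝ × ℝ => E q.1 q.2 s) Q :=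
    fun s hs => (hcE s hs).integrableOn_compact hQc
  have hS0 : (0:ℝ) ∈ Set.Icc 0 S := ⟨le_rfl, hT.1.trans hT.2⟩
  have hih : IntegrableOn (fun q : (ℝ × ℝ) × ℝ => h q.1.1 q.1.2 q.2) (Q ×ˢ Set.Icc 0 T) :=
    (hh.mono (Set.prod_mono le_rfl hTS)).integrableOn_compact (hQc.prod isCompact_Icc)
  have hih' : Integrable (fun q : (ℝ × ℝ) × ℝ => h q.1.1 q.1.2 q.2)
      ((volume.restrict Q).prod (volume.restrict (Set.Icc 0 T))) := by
    rw [Measure.prod_restrict]; exact hih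
  have hswap : (∫ s in (0:ℝ)..T, ∫ q in Q, h q.1 q.2 s) =
      ∫ q in Q, ∫ s in Set.Icc 0 T, h q.1 q.2 s := by
    rw [intervalIntegral.integral_of_le h0.le, ← integral_Icc_eq_integral_Ioc]
    exact (integral_integral_swap (f := fun (q : ℝ × ℝ) s => h q.1 q.2 s) hih').symm
  have hiψ : IntegrableOn (fun q : ℝ × ℝ => ∫ s in Set.Icc 0 T, h q.1 q.2 s) Q :=
    hih'.integral_prod_left
  have hsym : ∀ φ : ℝ × ℝ → ℝ, IntegrableOn φ Q →
      (Integrable φ ((volume.restrict (Set.Icc (-a) a)).prod (volume.restrict (Set.Icc (-b) b)))) := by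
    intro φ hφ
    rw [Measure.prod_restrict]; exact hφ
  have hfub : ∀ φ : ℝ × ℝ → ℝ, IntegrableOn φ Q →
      ∫ q in Q, φ q = ∫ y in Set.Icc (-b) b, ∫ x in Set.Icc (-a) a, φ (x, y) := by
    intro φ hφ
    have := integral_prod_symm φ (hsym φ hφ)
    rw [Measure.prod_restrict] at this
    exact this
  rw [hswap, hfub _ (hiE T hT), hfub _ (hiE 0 hS0), hfub _ hiψ,
    ← integral_sub (hsym _ (hiE T hT)).integral_prod_right (hsym _ (hiE 0 hS0)).integral_prod_right,
    ← setIntegral_congr_set (Ioo_ae_eq_Icc (a := -b) (b := b)),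
    ← setIntegral_congr_set (Ioo_ae_eq_Icc (a := -b) (b := b))]
  refine setIntegral_mono_on ?_ ?_ measurableSet_Ioo ?_
  · exact IntegrableOn.mono_set (t := Set.Icc (-b) b) ((hsym _ (hiE T hT)).integral_prod_right.sub
      (hsym _ (hiE 0 hS0)).integral_prod_right) Set.Ioo_subset_Icc_self
  · exact IntegrableOn.mono_set (t := Set.Icc (-b) b) (hsym _ hiψ).integral_prod_right
      Set.Ioo_subset_Icc_self
  · intro y hy
    have hy' := Set.Ioo_subset_Icc_self hy
    refine fgm_slice (fun q => E q.1 y q.2) (fun q => h q.1 y q.2) a T ha h0 ?_ ?_ ?_ ?_ ?_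
    · refine hE.comp (f := fun q : ℝ × ℝ => (q.1, y, q.2)) (by fun_prop) ?_
      intro q hq
      exact ⟨hq.1, hy', hTS hq.2⟩
    · refine hh.comp (f := fun q : ℝ × ℝ => ((q.1, y), q.2)) (by fun_prop) ?_
      intro q hq
      exact ⟨⟨hq.1, hy'⟩, hTS hq.2⟩
    · intro x hx s hs
      exact hD x hx y hy s ⟨hs.1, hs.2.trans_le hT.2⟩
    · exact fun s hs => hBa y hy' s (hTS hs)
    · exact fun s hs => hBm y hy' s (hTS hs)

lemma fgm_quad_deriv (A : Matrix (Fin 2) (Fin 2) ℝ) (hA : A.PosDef) (u : ℝ → Fin 2 → ℝ)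
    (u' : Fin 2 → ℝ) (t : ℝ) (hu : HasDerivAt u u' t) :
    HasDerivAt (fun t => u t ⬝ᵥ A.mulVec (u t)) (2 * (u t ⬝ᵥ A.mulVec u')) t := by
  have h0 := hasDerivAt_pi.1 hu 0
  have h1 := hasDerivAt_pi.1 hu 1
  have hs : A 1 0 = A 0 1 := by
    have := hA.1.apply 0 1
    simpa using this
  simp only [Matrix.mulVec, dotProduct, Fin.sum_univ_two]
  refine ((h0.mul ((h0.const_mul (A 0 0)).add (h1.const_mul (A 0 1)))).add
    (h1.mul ((h0.const_mul (A 1 0)).add (h1.const_mul (A 1 1))))).congr_deriv ?_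
  simp only [Pi.add_apply]
  rw [hs]; ring

lemma fgm_quad_contDiffOn {X : Type*} [NormedAddCommGroup X] [NormedSpace ℝ X]
    (A : Matrix (Fin 2) (Fin 2) ℝ) (u : X → Fin 2 → ℝ) (D : Set X) (hu : ContDiffOn ℝ 1 u D) :
    ContDiffOn ℝ 1 (fun t => u t ⬝ᵥ A.mulVec (u t)) D := by
  have h := contDiffOn_pi.1 hu
  have h0 := h 0
  have h1 := h 1
  simp only [Matrix.mulVec, dotProduct, Fin.sum_univ_two]
  fun_prop

lemma fgm_quad_nonneg (A : Matrix (Fin 2) (Fin 2) ℝ) (hA : A.PosSemidef) (u : Fin 2 → ℝ) :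
    0 ≤ u ⬝ᵥ A.mulVec u := by
  simpa using hA.dotProduct_mulVec_nonneg u

/-- Pointwise dissipation inequality. -/
lemma fgm_dissip (n : ℕ)
    (K₀ : Matrix (Fin 2) (Fin 2) ℝ) (K C : Fin n → Matrix (Fin 2) (Fin 2) ℝ)
    (hK₀ : K₀.PosDef) (hK : ∀ i, (K i).PosDef) (hC : ∀ i, (C i).PosDef)
    (M : Matrix (Fin 2) (Fin 2) ℝ) (hM : M.PosDef) (V r : ℝ) (hV : 0 < V) (hr : 0 ≤ r)
    (z Dz v : Fin 2 → ℝ) (f Df : Fin n → Fin 2 → ℝ)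
    (h1 : Dz = -((V⁻¹ * r) • ((M * M)⁻¹.mulVec (K₀.mulVec z + ∑ i, f i))) - v)
    (h2 : ∀ i, Df i = -(V⁻¹ • ((C i * (K i)⁻¹)⁻¹.mulVec (f i))) + (K i).mulVec Dz) :
    z ⬝ᵥ K₀.mulVec Dz + ∑ i, f i ⬝ᵥ (K i)⁻¹.mulVec (Df i) ≤
      -((K₀.mulVec z + ∑ i, f i) ⬝ᵥ v) := by
  have hf : ∀ i, f i ⬝ᵥ (K i)⁻¹.mulVec (Df i) ≤ f i ⬝ᵥ Dz := by
    intro i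
    have hu : IsUnit (K i).det := (Matrix.isUnit_iff_isUnit_det _).1 (hK i).isUnit
    rw [h2 i, Matrix.mulVec_add, Matrix.mulVec_neg, Matrix.mulVec_smul, Matrix.mulVec_mulVec,
      Matrix.mulVec_mulVec, Matrix.mul_inv_rev, Matrix.nonsing_inv_nonsing_inv _ hu,
      ← Matrix.mul_assoc, Matrix.nonsing_inv_mul _ hu, Matrix.one_mul, Matrix.one_mulVec,
      dotProduct_add, dotProduct_neg, dotProduct_smul, smul_eq_mul]
    have := mul_nonneg (inv_nonneg.2 hV.le) (fgm_quad_nonneg _ (hC i).inv.posSemidef (f i))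
    linarith
  have hz : z ⬝ᵥ K₀.mulVec Dz = K₀.mulVec z ⬝ᵥ Dz := by
    have hs : K₀ᵀ = K₀ := by simpa using hK₀.1.eq
    rw [dotProduct_mulVec, ← mulVec_transpose, hs]
  have hMM : (M * M)⁻¹.PosSemidef := by
    have := Matrix.posSemidef_conjTranspose_mul_self M
    rw [hM.1.eq] at this
    exact this.inv
  have hsum := Finset.sum_le_sum (s := Finset.univ) fun i _ => hf i
  rw [← sum_dotProduct] at hsum
  have hpsi := mul_nonneg (mul_nonneg (inv_nonneg.2 hV.le) hr)
    (fgm_quad_nonneg _ hMM (K₀.mulVec z + ∑ i, f i))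
  have htot : (K₀.mulVec z + ∑ i, f i) ⬝ᵥ Dz =
      -((V⁻¹ * r) * ((K₀.mulVec z + ∑ i, f i) ⬝ᵥ (M * M)⁻¹.mulVec (K₀.mulVec z + ∑ i, f i)))
      - (K₀.mulVec z + ∑ i, f i) ⬝ᵥ v := by
    conv_lhs => rw [h1]
    rw [dotProduct_sub, dotProduct_neg, dotProduct_smul, smul_eq_mul]
  rw [add_dotProduct] at htot
  linarith

/-- Lemma 5.1: passivity of the standard linear FrBD_{n+1}-GM model on a rectangular
contact area `𝒞 = [−a,a] × [−b,b]`, with leading-edge boundary condition at `x = a` and a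
pressure satisfying `∂p/∂x ≥ 0` (i.e. `∇·(p V̄) ≤ 0` for the transport field `V̄ = (−1,0)`). -/
theorem frbd_gm_rectangular_passivity (n : ℕ)
    (K₀ : Matrix (Fin 2) (Fin 2) ℝ) (K C : Fin n → Matrix (Fin 2) (Fin 2) ℝ)
    (hK₀ : K₀.PosDef) (hK : ∀ i, (K i).PosDef) (hC : ∀ i, (C i).PosDef)
    (Mm : (Fin 2 → ℝ) → Matrix (Fin 2) (Fin 2) ℝ)
    (hMm : ∀ y, (Mm y).PosDef) (hMmcont : Continuous Mm)
    (ε : ℝ) (hε : 0 ≤ ε)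
    (a b S Vmin : ℝ) (ha : 0 < a) (hb : 0 < b) (hS : 0 < S) (hVmin : 0 < Vmin)
    -- the pressure distribution
    (p : ℝ × ℝ → ℝ) (hp : ContDiff ℝ 1 p)
    (hp0 : ∀ q ∈ Set.Icc (-a) a ×ˢ Set.Icc (-b) b, 0 ≤ p q)
    (hpx : ∀ q ∈ Set.Icc (-a) a ×ˢ Set.Icc (-b) b,
      0 ≤ deriv (fun x => p (x, q.2)) q.1)
    -- the slip input and rolling speed
    (vb : ℝ → ℝ → ℝ → (Fin 2 → ℝ))
    (hvb : ContinuousOn (fun q : (ℝ × ℝ) × ℝ => vb q.1.1 q.1.2 q.2)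
      ((Set.Icc (-a) a ×ˢ Set.Icc (-b) b) ×ˢ Set.Icc 0 S))
    (Vr : ℝ → ℝ) (hVrc : ContinuousOn Vr (Set.Icc 0 S))
    (hVr : ∀ s ∈ Set.Icc 0 S, Vmin ≤ Vr s)
    -- the states and their regularity
    (z : ℝ → ℝ → ℝ → (Fin 2 → ℝ)) (f : Fin n → ℝ → ℝ → ℝ → (Fin 2 → ℝ))
    (hzC1 : ContDiffOn ℝ 1 (fun q : ℝ × ℝ × ℝ => z q.1 q.2.1 q.2.2)
      (Set.Icc (-a) a ×ˢ Set.Icc (-b) b ×ˢ Set.Icc 0 S))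
    (hfC1 : ∀ i, ContDiffOn ℝ 1 (fun q : ℝ × ℝ × ℝ => f i q.1 q.2.1 q.2.2)
      (Set.Icc (-a) a ×ˢ Set.Icc (-b) b ×ˢ Set.Icc 0 S))
    -- partial derivatives at interior points
    (zx zs : ℝ → ℝ → ℝ → (Fin 2 → ℝ)) (fx fs : Fin n → ℝ → ℝ → ℝ → (Fin 2 → ℝ))
    (hzx : ∀ x ∈ Set.Ioo (-a) a, ∀ y ∈ Set.Ioo (-b) b, ∀ s ∈ Set.Ioo 0 S,
      HasDerivAt (fun x' => z x' y s) (zx x y s) x)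
    (hzs : ∀ x ∈ Set.Ioo (-a) a, ∀ y ∈ Set.Ioo (-b) b, ∀ s ∈ Set.Ioo 0 S,
      HasDerivAt (fun s' => z x y s') (zs x y s) s)
    (hfx : ∀ i, ∀ x ∈ Set.Ioo (-a) a, ∀ y ∈ Set.Ioo (-b) b, ∀ s ∈ Set.Ioo 0 S,
      HasDerivAt (fun x' => f i x' y s) (fx i x y s) x)
    (hfs : ∀ i, ∀ x ∈ Set.Ioo (-a) a, ∀ y ∈ Set.Ioo (-b) b, ∀ s ∈ Set.Ioo 0 S,
      HasDerivAt (fun s' => f i x y s') (fs i x y s) s)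
    -- the standard linear FrBD_{n+1}-GM equations at interior points: D z = Ψ f − v̄
    (hPDEz : ∀ x ∈ Set.Ioo (-a) a, ∀ y ∈ Set.Ioo (-b) b, ∀ s ∈ Set.Ioo 0 S,
      zs x y s - zx x y s =
        -(((Vr s)⁻¹ *
            regNorm ε ((Mm (Vr s • vb x y s)).mulVec (Vr s • vb x y s))) •
          ((Mm (Vr s • vb x y s) * Mm (Vr s • vb x y s))⁻¹.mulVec
            (K₀.mulVec (z x y s) + ∑ i, f i x y s))) - vb x y s)
    -- and D fᵢ = −(1/V_r) τᵢ⁻¹ fᵢ + Kᵢ D z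
    (hPDEf : ∀ i, ∀ x ∈ Set.Ioo (-a) a, ∀ y ∈ Set.Ioo (-b) b, ∀ s ∈ Set.Ioo 0 S,
      fs i x y s - fx i x y s =
        -((Vr s)⁻¹ • ((C i * (K i)⁻¹)⁻¹.mulVec (f i x y s))) +
          (K i).mulVec (zs x y s - zx x y s))
    -- leading-edge boundary condition at x = a
    (hBCz : ∀ y ∈ Set.Icc (-b) b, ∀ s ∈ Set.Icc 0 S, z a y s = 0)
    (hBCf : ∀ i, ∀ y ∈ Set.Icc (-b) b, ∀ s ∈ Set.Icc 0 S, f i a y s = 0) :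
    let W : ℝ → ℝ := fun s =>
      (1/2) * ∫ q in Set.Icc (-a) a ×ˢ Set.Icc (-b) b,
        p q * ((z q.1 q.2 s ⬝ᵥ K₀.mulVec (z q.1 q.2 s)) +
          ∑ i, f i q.1 q.2 s ⬝ᵥ (K i)⁻¹.mulVec (f i q.1 q.2 s))
    ∀ s ∈ Set.Icc 0 S,
      W s - W 0 ≤ ∫ s' in (0:ℝ)..s,
        -(∫ q in Set.Icc (-a) a ×ˢ Set.Icc (-b) b,
          p q * ((K₀.mulVec (z q.1 q.2 s') + ∑ i, f i q.1 q.2 s') ⬝ᵥ vb q.1 q.2 s')) := by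
  intro W s hs
  set E : ℝ → ℝ → ℝ → ℝ := fun x y s => (1/2) * (p (x, y) * ((z x y s ⬝ᵥ K₀.mulVec (z x y s)) +
          ∑ i, f i x y s ⬝ᵥ (K i)⁻¹.mulVec (f i x y s))) with hE
  have hq0 : ∀ x y s, 0 ≤ (z x y s ⬝ᵥ K₀.mulVec (z x y s)) +
          ∑ i, f i x y s ⬝ᵥ (K i)⁻¹.mulVec (f i x y s) := fun x y s =>
    add_nonneg (fgm_quad_nonneg _ hK₀.posSemidef _)
      (Finset.sum_nonneg fun i _ => fgm_quad_nonneg _ (hK i).inv.posSemidef _)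
  have hcz : ContinuousOn (fun q : (ℝ × ℝ) × ℝ => z q.1.1 q.1.2 q.2)
      ((Set.Icc (-a) a ×ˢ Set.Icc (-b) b) ×ˢ Set.Icc 0 S) := by
    refine hzC1.continuousOn.comp (f := fun q : (ℝ × ℝ) × ℝ => (q.1.1, q.1.2, q.2))
      (by fun_prop) ?_
    intro q hq
    exact ⟨hq.1.1, hq.1.2, hq.2⟩
  have hcf : ∀ i, ContinuousOn (fun q : (ℝ × ℝ) × ℝ => f i q.1.1 q.1.2 q.2)
      ((Set.Icc (-a) a ×ˢ Set.Icc (-b) b) ×ˢ Set.Icc 0 S) := by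
    intro i
    refine (hfC1 i).continuousOn.comp (f := fun q : (ℝ × ℝ) × ℝ => (q.1.1, q.1.2, q.2))
      (by fun_prop) ?_
    intro q hq
    exact ⟨hq.1.1, hq.1.2, hq.2⟩
  have main := fgm_box E (fun x y s => -(p (x, y) *
      ((K₀.mulVec (z x y s) + ∑ i, f i x y s) ⬝ᵥ vb x y s))) a b S ha ?_ ?_ ?_ ?_ ?_ s hs
  · simp only [hE, integral_neg, integral_const_mul] at main
    exact main
  · have h1 := fgm_quad_contDiffOn K₀ _ _ hzC1
    have h2 := fun i => fgm_quad_contDiffOn (K i)⁻¹ _ _ (hfC1 i)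
    have h3 : ContDiffOn ℝ 1 (fun q : ℝ × ℝ × ℝ => p (q.1, q.2.1))
        (Set.Icc (-a) a ×ˢ Set.Icc (-b) b ×ˢ Set.Icc 0 S) :=
      (hp.comp (by fun_prop : ContDiff ℝ 1 (fun q : ℝ × ℝ × ℝ => (q.1, q.2.1)))).contDiffOn
    exact contDiffOn_const.mul (h3.mul (h1.add (ContDiffOn.sum fun i _ => h2 i)))
  · have h3 : ContinuousOn (fun q : (ℝ × ℝ) × ℝ => p (q.1.1, q.1.2))
        ((Set.Icc (-a) a ×ˢ Set.Icc (-b) b) ×ˢ Set.Icc 0 S) :=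
      (hp.continuous.comp (by fun_prop)).continuousOn
    have h4 : ContinuousOn (fun q : (ℝ × ℝ) × ℝ => K₀.mulVec (z q.1.1 q.1.2 q.2))
        ((Set.Icc (-a) a ×ˢ Set.Icc (-b) b) ×ˢ Set.Icc 0 S) :=
      (Continuous.matrix_mulVec continuous_const continuous_id).comp_continuousOn hcz
    have h5 := h4.add (continuousOn_finsetSum Finset.univ fun i _ => hcf i)
    have h6 := h5.prodMk hvb
    have h7 : Continuous (fun w : (Fin 2 → ℝ) × (Fin 2 → ℝ) => w.1 ⬝ᵥ w.2) :=
      Continuous.dotProduct continuous_fst continuous_snd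
    exact (h3.mul (h7.comp_continuousOn h6)).neg
  · intro x hx y hy t ht
    have hq : ((x, y) : ℝ × ℝ) ∈ Set.Icc (-a) a ×ˢ Set.Icc (-b) b :=
      ⟨Set.Ioo_subset_Icc_self hx, Set.Ioo_subset_Icc_self hy⟩
    have hpd : HasDerivAt (fun x' => p (x', y)) (deriv (fun x' => p (x', y)) x) x := by
      refine DifferentiableAt.hasDerivAt ?_
      have : Differentiable ℝ p := hp.differentiable one_ne_zero
      fun_prop
    have dx := ((hpd.mul ((fgm_quad_deriv K₀ hK₀ _ _ _ (hzx x hx y hy t ht)).add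
      (HasDerivAt.fun_sum (u := Finset.univ) fun i _ =>
        fgm_quad_deriv _ (hK i).inv _ _ _ (hfx i x hx y hy t ht)))).const_mul (1/2 : ℝ))
    have ds := (((fgm_quad_deriv K₀ hK₀ _ _ _ (hzs x hx y hy t ht)).add
      (HasDerivAt.fun_sum (u := Finset.univ) fun i _ =>
        fgm_quad_deriv _ (hK i).inv _ _ _ (hfs i x hx y hy t ht))).const_mul (p (x, y))).const_mul
          (1/2 : ℝ)
    refine ⟨_, _, dx, ds, ?_⟩
    have hd := fgm_dissip n K₀ K C hK₀ hK hC _ (hMm (Vr t • vb x y t)) (Vr t) _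
      (hVmin.trans_le (hVr t (Set.Ioo_subset_Icc_self ht))) (Real.sqrt_nonneg _)
      (z x y t) _ (vb x y t) (fun i => f i x y t) _ (hPDEz x hx y hy t ht)
      (fun i => hPDEf i x hx y hy t ht)
    have hd2 := mul_le_mul_of_nonneg_left hd (hp0 _ hq)
    have hpp := mul_nonneg (hpx _ hq) (hq0 x y t)
    simp only [Matrix.mulVec_sub, dotProduct_sub, Finset.sum_sub_distrib] at hd2
    simp only [Pi.add_apply, ← Finset.mul_sum] at hpp ⊢
    linarith
  · intro y hy t ht
    simp [hE, hBCz y hy t ht, hBCf _ y hy t ht]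
  · intro y hy t ht
    exact mul_nonneg (by norm_num) (mul_nonneg (hp0 _ ⟨⟨le_rfl, by linarith⟩, hy⟩) (hq0 _ _ _))
end

section
/- (Lemma 5.2: passivity of the standard linear FrBD_{n+1}-GKV model on a rectangular contact area.) Let a, b, S > 0 and let 𝒞 = [−a, a] × [−b, b]. Let p : ℝ² → ℝ be continuously differentiable with p ≥ 0 and ∂p/∂x ≥ 0 on 𝒞 (so that ∇·(p V̄) ≤ 0 for the transport field V̄ = (−1, 0), condition (56)). Let ε ≥ 0, let v̄ : 𝒞 × [0, S] → ℝ² be continuous, V_r : [0, S] → ℝ continuous with V_r(s) ≥ V_min for some V_min > 0, and let M be continuous with symmetric positive definite values. Suppose z, z_1, …, z_n : 𝒞 × [0, S] → ℝ² are continuously differentiable, satisfy the standard linear FrBD_{n+1}-GKV equations at every interior point, and satisfy the leading-edge boundary condition z(a, y, s) = 0 and z_i(a, y, s) = 0 for all y ∈ [−b, b], s ∈ [0, S], i = 1,…,n. Define z₀ := z − Σ_{i=1}^n z_i, the storage function W(s) := ½ ∬_𝒞 p(x, y) ( z₀(x,y,s)ᵀ K₀ z₀(x,y,s) + Σ_{i=1}^n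 z_i(x,y,s)ᵀ K_i z_i(x,y,s) ) dx dy, and the total force f := K₀ z₀. Then for every s ∈ [0, S], W(s) − W(0) ≤ ∫₀ˢ ( −∬_𝒞 p(x, y) f(x,y,s′)ᵀ v̄(x,y,s′) dx dy ) ds′. -/
open Matrix MeasureTheory

lemma scalar_ineq {a b S s : ℝ} (ha : 0 < a) (hs : s ∈ Set.Icc 0 S)
    (w Ws Wx h : (ℝ × ℝ) × ℝ → ℝ)
    (hw : ContinuousOn w ((Set.Icc (-a) a ×ˢ Set.Icc (-b) b) ×ˢ Set.Icc 0 S))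
    (hWs : ContinuousOn Ws ((Set.Icc (-a) a ×ˢ Set.Icc (-b) b) ×ˢ Set.Icc 0 S))
    (hWx : ContinuousOn Wx ((Set.Icc (-a) a ×ˢ Set.Icc (-b) b) ×ˢ Set.Icc 0 S))
    (hh : ContinuousOn h ((Set.Icc (-a) a ×ˢ Set.Icc (-b) b) ×ˢ Set.Icc 0 S))
    (hds : ∀ q ∈ Set.Icc (-a) a ×ˢ Set.Icc (-b) b, ∀ t ∈ Set.Ioo 0 S,
      HasDerivAt (fun t => w (q, t)) (Ws (q, t)) t)
    (hdx : ∀ y ∈ Set.Icc (-b) b, ∀ t ∈ Set.Icc 0 S, ∀ x ∈ Set.Ioo (-a) a,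
      HasDerivAt (fun x => w ((x, y), t)) (Wx ((x, y), t)) x)
    (hle : ∀ q ∈ (Set.Icc (-a) a ×ˢ Set.Icc (-b) b) ×ˢ Set.Icc 0 S, Ws q ≤ h q + Wx q)
    (h0 : ∀ y ∈ Set.Icc (-b) b, ∀ t ∈ Set.Icc 0 S, w ((a, y), t) = 0)
    (hpos : ∀ y ∈ Set.Icc (-b) b, ∀ t ∈ Set.Icc 0 S, 0 ≤ w ((-a, y), t)) :
    (∫ q in Set.Icc (-a) a ×ˢ Set.Icc (-b) b, w (q, s)) -
      (∫ q in Set.Icc (-a) a ×ˢ Set.Icc (-b) b, w (q, 0)) ≤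
    ∫ t in (0:ℝ)..s, ∫ q in Set.Icc (-a) a ×ˢ Set.Icc (-b) b, h (q, t) := by
  set Q : Set (ℝ × ℝ) := Set.Icc (-a) a ×ˢ Set.Icc (-b) b with hQ
  have hQc : IsCompact Q := isCompact_Icc.prod isCompact_Icc
  have hQm : MeasurableSet Q := measurableSet_Icc.prod measurableSet_Icc
  have hsub : Q ×ˢ Set.Icc 0 s ⊆ Q ×ˢ Set.Icc 0 S :=
    Set.prod_mono_right (Set.Icc_subset_Icc_right hs.2)
  have hKc : IsCompact (Q ×ˢ Set.Icc 0 s) := hQc.prod isCompact_Icc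
  have slice : ∀ g : (ℝ × ℝ) × ℝ → ℝ, ContinuousOn g (Q ×ˢ Set.Icc 0 S) →
      ∀ t ∈ Set.Icc 0 S, IntegrableOn (fun q => g (q, t)) Q := by
    intro g hg t ht
    refine ContinuousOn.integrableOn_compact hQc ?_
    exact hg.comp (by fun_prop) (fun q hq => ⟨hq, ht⟩)
  have int3 : ∀ g : (ℝ × ℝ) × ℝ → ℝ, ContinuousOn g (Q ×ˢ Set.Icc 0 S) →
      Integrable g ((volume.restrict Q).prod (volume.restrict (Set.Icc 0 s))) := by
    intro g hg
    rw [Measure.prod_restrict]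
    exact ContinuousOn.integrableOn_compact hKc (hg.mono hsub)
  have h0S : (0:ℝ) ∈ Set.Icc 0 S := ⟨le_rfl, hs.1.trans hs.2⟩
  -- step 1
  have e1 : (∫ q in Q, w (q, s)) - (∫ q in Q, w (q, 0)) =
      ∫ q in Q, ∫ t in Set.Icc 0 s, Ws (q, t) := by
    rw [← integral_sub (slice w hw s hs) (slice w hw 0 h0S)]
    refine setIntegral_congr_fun hQm fun q hq => ?_
    have hc : ∀ g : (ℝ × ℝ) × ℝ → ℝ, ContinuousOn g (Q ×ˢ Set.Icc 0 S) →
        ContinuousOn (fun t => g (q, t)) (Set.Icc 0 s) := fun g hg =>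
      hg.comp (by fun_prop) (fun t ht => hsub ⟨hq, ht⟩)
    have := intervalIntegral.integral_eq_sub_of_hasDerivAt_of_le hs.1 (hc w hw)
      (fun t ht => hds q hq t ⟨ht.1, ht.2.trans_le hs.2⟩)
      ((hc Ws hWs).intervalIntegrable_of_Icc hs.1)
    rw [← this, intervalIntegral.integral_of_le hs.1, integral_Icc_eq_integral_Ioc]
  have hIle : (∫ q in Q, ∫ t in Set.Icc 0 s, Ws (q, t)) ≤
      ∫ q in Q, ∫ t in Set.Icc 0 s, (h (q, t) + Wx (q, t)) := by
    rw [integral_integral (f := fun q t => Ws (q, t)) (int3 Ws hWs),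
      integral_integral (f := fun q t => h (q, t) + Wx (q, t)) (int3 _ (hh.add hWx))]
    rw [Measure.prod_restrict]
    have i1 := int3 Ws hWs
    have i2 := int3 _ (hh.add hWx)
    rw [Measure.prod_restrict] at i1 i2
    exact setIntegral_mono_on i1 i2 (hQm.prod measurableSet_Icc) (fun q hq => hle q (hsub hq))
  have e2 : (∫ q in Q, ∫ t in Set.Icc 0 s, (h (q, t) + Wx (q, t))) =
      ∫ t in Set.Icc 0 s, ∫ q in Q, (h (q, t) + Wx (q, t)) :=
    integral_integral_swap (f := fun q t => h (q, t) + Wx (q, t)) (int3 _ (hh.add hWx))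
  have hx : ∀ t ∈ Set.Icc 0 s, (∫ q in Q, Wx (q, t)) ≤ 0 := by
    intro t ht
    have htS : t ∈ Set.Icc 0 S := ⟨ht.1, ht.2.trans hs.2⟩
    have hi := slice Wx hWx t htS
    have : (∫ q in Q, Wx (q, t)) =
        ∫ y in Set.Icc (-b) b, ∫ x in Set.Icc (-a) a, Wx ((x, y), t) := by
      have hi' : Integrable (fun q => Wx (q, t))
        ((volume.restrict (Set.Icc (-a) a)).prod (volume.restrict (Set.Icc (-b) b))) := by
        rw [Measure.prod_restrict]; exact hi
      rw [← integral_prod_symm _ hi', Measure.prod_restrict]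
      rfl
    rw [this]
    refine setIntegral_nonpos measurableSet_Icc fun y hy => ?_
    have hc : ∀ g : (ℝ × ℝ) × ℝ → ℝ, ContinuousOn g (Q ×ˢ Set.Icc 0 S) →
        ContinuousOn (fun x => g ((x, y), t)) (Set.Icc (-a) a) := fun g hg =>
      hg.comp (by fun_prop) (fun x hx => ⟨⟨hx, hy⟩, htS⟩)
    have := intervalIntegral.integral_eq_sub_of_hasDerivAt_of_le (by linarith : -a ≤ a) (hc w hw)
      (fun x hx => hdx y hy t htS x hx)
      ((hc Wx hWx).intervalIntegrable_of_Icc (by linarith))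
    rw [integral_Icc_eq_integral_Ioc, ← intervalIntegral.integral_of_le (by linarith), this,
      h0 y hy t htS]
    linarith [hpos y hy t htS]
  rw [e1]
  refine hIle.trans ?_
  rw [e2, intervalIntegral.integral_of_le hs.1, ← integral_Icc_eq_integral_Ioc]
  refine setIntegral_mono_on (int3 _ (hh.add hWx)).integral_prod_right
    (int3 _ hh).integral_prod_right measurableSet_Icc fun t ht => ?_
  have htS : t ∈ Set.Icc 0 S := ⟨ht.1, ht.2.trans hs.2⟩
  rw [integral_add (slice h hh t htS) (slice Wx hWx t htS)]
  linarith [hx t ht]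

lemma symm_dot {A : Matrix (Fin 2) (Fin 2) ℝ} (hA : A.PosDef) (u v : Fin 2 → ℝ) :
    u ⬝ᵥ A.mulVec v = A.mulVec u ⬝ᵥ v := by
  have h : A 0 1 = A 1 0 := by simpa using hA.isHermitian.apply 1 0
  simp [Matrix.mulVec, dotProduct, Fin.sum_univ_two, h]; ring

lemma pos_dot {A : Matrix (Fin 2) (Fin 2) ℝ} (hA : A.PosDef) (u : Fin 2 → ℝ) :
    0 ≤ u ⬝ᵥ A.mulVec u := by
  simpa using hA.posSemidef.dotProduct_mulVec_nonneg u

lemma pos_sq {A : Matrix (Fin 2) (Fin 2) ℝ} (hA : A.PosDef) (u : Fin 2 → ℝ) :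
    0 ≤ u ⬝ᵥ (A * A)⁻¹.mulVec u := by
  rw [Matrix.mul_inv_rev, ← Matrix.mulVec_mulVec, symm_dot hA.inv]
  simp only [dotProduct]
  exact Finset.sum_nonneg fun i _ => mul_self_nonneg _

lemma hasDerivAt_quad {A : Matrix (Fin 2) (Fin 2) ℝ} (hA : A.PosDef) {u : ℝ → Fin 2 → ℝ}
    {u' : Fin 2 → ℝ} {t : ℝ} (hu : HasDerivAt u u' t) :
    HasDerivAt (fun t => u t ⬝ᵥ A.mulVec (u t)) (2 * (A.mulVec (u t) ⬝ᵥ u')) t := by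
  have h : A 0 1 = A 1 0 := by simpa using hA.isHermitian.apply 1 0
  have h0 := hasDerivAt_pi.1 hu 0
  have h1 := hasDerivAt_pi.1 hu 1
  have := (h0.mul ((h0.const_mul (A 0 0)).add (h1.const_mul (A 0 1)))).add
    (h1.mul ((h0.const_mul (A 1 0)).add (h1.const_mul (A 1 1))))
  have e1 : (fun t => u t ⬝ᵥ A.mulVec (u t)) =
      (fun x => u x 0) * ((fun y => A 0 0 * u y 0) + fun y => A 0 1 * u y 1) +
      (fun x => u x 1) * ((fun y => A 1 0 * u y 0) + fun y => A 1 1 * u y 1) := by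
    funext t; simp [Matrix.mulVec, dotProduct, Fin.sum_univ_two]
  rw [e1]
  refine this.congr_deriv ?_
  simp [Matrix.mulVec, dotProduct, Fin.sum_univ_two, h]; ring

lemma contDiffOn_quad {E : Type*} [NormedAddCommGroup E] [NormedSpace ℝ E]
    (A : Matrix (Fin 2) (Fin 2) ℝ) {u : E → Fin 2 → ℝ} {B : Set E}
    (hu : ContDiffOn ℝ 1 u B) : ContDiffOn ℝ 1 (fun q => u q ⬝ᵥ A.mulVec (u q)) B := by
  have h0 := contDiffOn_pi.1 hu 0
  have h1 := contDiffOn_pi.1 hu 1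
  simp only [Matrix.mulVec, dotProduct, Fin.sum_univ_two]
  fun_prop

lemma continuousOn_dot {E : Type*} [TopologicalSpace E]
    (A : Matrix (Fin 2) (Fin 2) ℝ) {u v : E → Fin 2 → ℝ} {B : Set E}
    (hu : ContinuousOn u B) (hv : ContinuousOn v B) :
    ContinuousOn (fun q => A.mulVec (u q) ⬝ᵥ v q) B := by
  have h0 := continuousOn_pi.1 hu 0
  have h1 := continuousOn_pi.1 hu 1
  have h2 := continuousOn_pi.1 hv 0
  have h3 := continuousOn_pi.1 hv 1
  simp only [Matrix.mulVec, dotProduct, Fin.sum_univ_two]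
  fun_prop

/-- dissipation inequality, pointwise -/
lemma diss {n : ℕ} {K₀ : Matrix (Fin 2) (Fin 2) ℝ} {K C : Fin n → Matrix (Fin 2) (Fin 2) ℝ}
    (hC : ∀ i, (C i).PosDef) {M : Matrix (Fin 2) (Fin 2) ℝ} (hM : M.PosDef)
    {r V : ℝ} (hr : 0 ≤ r) (hV : 0 ≤ V) (z0 v d : Fin 2 → ℝ) (zi di : Fin n → Fin 2 → ℝ)
    (hd : d = -((V * r) • ((M * M)⁻¹.mulVec (K₀.mulVec z0))) - v)
    (hdi : ∀ i, di i = V • ((C i)⁻¹.mulVec (K₀.mulVec z0 - (K i).mulVec (zi i)))) :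
    K₀.mulVec z0 ⬝ᵥ (d - ∑ i, di i) + ∑ i, (K i).mulVec (zi i) ⬝ᵥ di i ≤
      - (K₀.mulVec z0 ⬝ᵥ v) := by
  set f := K₀.mulVec z0
  have e : f ⬝ᵥ (d - ∑ i, di i) + ∑ i, (K i).mulVec (zi i) ⬝ᵥ di i =
      f ⬝ᵥ d - ∑ i, (f - (K i).mulVec (zi i)) ⬝ᵥ di i := by
    simp only [dotProduct_sub, sub_dotProduct, dotProduct_sum, Finset.sum_sub_distrib]
    ring
  have h1 : 0 ≤ ∑ i, (f - (K i).mulVec (zi i)) ⬝ᵥ di i := by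
    refine Finset.sum_nonneg fun i _ => ?_
    rw [hdi, dotProduct_smul]
    exact mul_nonneg hV (pos_dot (hC i).inv _)
  have h2 : f ⬝ᵥ d ≤ - (f ⬝ᵥ v) := by
    rw [hd, dotProduct_sub, dotProduct_neg, dotProduct_smul, smul_eq_mul]
    have := mul_nonneg (mul_nonneg hV hr) (pos_sq hM f)
    linarith
  rw [e]; linarith

/-- Lemma 5.2: passivity of the standard linear FrBD_{n+1}-GKV model on a rectangular
contact area `𝒞 = [−a,a] × [−b,b]`, with leading-edge boundary condition at `x = a` and a
pressure satisfying `∂p/∂x ≥ 0` (i.e. `∇·(p V̄) ≤ 0` for the transport field `V̄ = (−1,0)`). -/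
theorem frbd_gkv_rectangular_passivity (n : ℕ)
    (K₀ : Matrix (Fin 2) (Fin 2) ℝ) (K C : Fin n → Matrix (Fin 2) (Fin 2) ℝ)
    (hK₀ : K₀.PosDef) (hK : ∀ i, (K i).PosDef) (hC : ∀ i, (C i).PosDef)
    (Mm : (Fin 2 → ℝ) → Matrix (Fin 2) (Fin 2) ℝ)
    (hMm : ∀ y, (Mm y).PosDef) (hMmcont : Continuous Mm)
    (ε : ℝ) (hε : 0 ≤ ε)
    (a b S Vmin : ℝ) (ha : 0 < a) (hb : 0 < b) (hS : 0 < S) (hVmin : 0 < Vmin)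
    -- the pressure distribution
    (p : ℝ × ℝ → ℝ) (hp : ContDiff ℝ 1 p)
    (hp0 : ∀ q ∈ Set.Icc (-a) a ×ˢ Set.Icc (-b) b, 0 ≤ p q)
    (hpx : ∀ q ∈ Set.Icc (-a) a ×ˢ Set.Icc (-b) b,
      0 ≤ deriv (fun x => p (x, q.2)) q.1)
    -- the slip input and rolling speed
    (vb : ℝ → ℝ → ℝ → (Fin 2 → ℝ))
    (hvb : ContinuousOn (fun q : (ℝ × ℝ) × ℝ => vb q.1.1 q.1.2 q.2)
      ((Set.Icc (-a) a ×ˢ Set.Icc (-b) b) ×ˢ Set.Icc 0 S))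
    (Vr : ℝ → ℝ) (hVrc : ContinuousOn Vr (Set.Icc 0 S))
    (hVr : ∀ s ∈ Set.Icc 0 S, Vmin ≤ Vr s)
    -- the states and their regularity
    (z : ℝ → ℝ → ℝ → (Fin 2 → ℝ)) (zi : Fin n → ℝ → ℝ → ℝ → (Fin 2 → ℝ))
    (hzC1 : ContDiffOn ℝ 1 (fun q : ℝ × ℝ × ℝ => z q.1 q.2.1 q.2.2)
      (Set.Icc (-a) a ×ˢ Set.Icc (-b) b ×ˢ Set.Icc 0 S))
    (hziC1 : ∀ i, ContDiffOn ℝ 1 (fun q : ℝ × ℝ × ℝ => zi i q.1 q.2.1 q.2.2)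
      (Set.Icc (-a) a ×ˢ Set.Icc (-b) b ×ˢ Set.Icc 0 S))
    -- partial derivatives at interior points
    (zx zs : ℝ → ℝ → ℝ → (Fin 2 → ℝ)) (zix zis : Fin n → ℝ → ℝ → ℝ → (Fin 2 → ℝ))
    (hzx : ∀ x ∈ Set.Ioo (-a) a, ∀ y ∈ Set.Ioo (-b) b, ∀ s ∈ Set.Ioo 0 S,
      HasDerivAt (fun x' => z x' y s) (zx x y s) x)
    (hzs : ∀ x ∈ Set.Ioo (-a) a, ∀ y ∈ Set.Ioo (-b) b, ∀ s ∈ Set.Ioo 0 S,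
      HasDerivAt (fun s' => z x y s') (zs x y s) s)
    (hzix : ∀ i, ∀ x ∈ Set.Ioo (-a) a, ∀ y ∈ Set.Ioo (-b) b, ∀ s ∈ Set.Ioo 0 S,
      HasDerivAt (fun x' => zi i x' y s) (zix i x y s) x)
    (hzis : ∀ i, ∀ x ∈ Set.Ioo (-a) a, ∀ y ∈ Set.Ioo (-b) b, ∀ s ∈ Set.Ioo 0 S,
      HasDerivAt (fun s' => zi i x y s') (zis i x y s) s)
    -- the standard linear FrBD_{n+1}-GKV equations at interior points: D z = Ψ K₀ z₀ − v̄
    (hPDEz : ∀ x ∈ Set.Ioo (-a) a, ∀ y ∈ Set.Ioo (-b) b, ∀ s ∈ Set.Ioo 0 S,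
      zs x y s - zx x y s =
        -(((Vr s)⁻¹ *
            regNorm ε ((Mm (Vr s • vb x y s)).mulVec (Vr s • vb x y s))) •
          ((Mm (Vr s • vb x y s) * Mm (Vr s • vb x y s))⁻¹.mulVec
            (K₀.mulVec (z x y s - ∑ i, zi i x y s)))) - vb x y s)
    -- and D zᵢ = (1/V_r) Cᵢ⁻¹ (K₀ z₀ − Kᵢ zᵢ)
    (hPDEzi : ∀ i, ∀ x ∈ Set.Ioo (-a) a, ∀ y ∈ Set.Ioo (-b) b, ∀ s ∈ Set.Ioo 0 S,
      zis i x y s - zix i x y s =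
        (Vr s)⁻¹ • ((C i)⁻¹.mulVec
          (K₀.mulVec (z x y s - ∑ j, zi j x y s) - (K i).mulVec (zi i x y s))))
    -- leading-edge boundary condition at x = a
    (hBCz : ∀ y ∈ Set.Icc (-b) b, ∀ s ∈ Set.Icc 0 S, z a y s = 0)
    (hBCzi : ∀ i, ∀ y ∈ Set.Icc (-b) b, ∀ s ∈ Set.Icc 0 S, zi i a y s = 0) :
    let z₀ : ℝ → ℝ → ℝ → (Fin 2 → ℝ) := fun x y s => z x y s - ∑ i, zi i x y s
    let W : ℝ → ℝ := fun s =>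
      (1/2) * ∫ q in Set.Icc (-a) a ×ˢ Set.Icc (-b) b,
        p q * ((z₀ q.1 q.2 s ⬝ᵥ K₀.mulVec (z₀ q.1 q.2 s)) +
          ∑ i, zi i q.1 q.2 s ⬝ᵥ (K i).mulVec (zi i q.1 q.2 s))
    ∀ s ∈ Set.Icc 0 S,
      W s - W 0 ≤ ∫ s' in (0:ℝ)..s,
        -(∫ q in Set.Icc (-a) a ×ˢ Set.Icc (-b) b,
          p q * (K₀.mulVec (z₀ q.1 q.2 s') ⬝ᵥ vb q.1 q.2 s')) := by
  intro z₀ W s hs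
  set Q : Set (ℝ × ℝ) := Set.Icc (-a) a ×ˢ Set.Icc (-b) b with hQ
  set B : Set ((ℝ × ℝ) × ℝ) := Q ×ˢ Set.Icc 0 S with hB
  let w : (ℝ × ℝ) × ℝ → ℝ := fun q =>
    p q.1 * ((z₀ q.1.1 q.1.2 q.2 ⬝ᵥ K₀.mulVec (z₀ q.1.1 q.1.2 q.2)) +
          ∑ i, zi i q.1.1 q.1.2 q.2 ⬝ᵥ (K i).mulVec (zi i q.1.1 q.1.2 q.2))
  let h : (ℝ × ℝ) × ℝ → ℝ := fun q =>
    2 * -(p q.1 * (K₀.mulVec (z₀ q.1.1 q.1.2 q.2) ⬝ᵥ vb q.1.1 q.1.2 q.2))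
  have hmap : ContDiff ℝ 1 (fun q : (ℝ × ℝ) × ℝ => (q.1.1, q.1.2, q.2)) := by fun_prop
  have hmaps : Set.MapsTo (fun q : (ℝ × ℝ) × ℝ => (q.1.1, q.1.2, q.2)) B
      (Set.Icc (-a) a ×ˢ Set.Icc (-b) b ×ˢ Set.Icc 0 S) :=
    fun q hq => ⟨hq.1.1, hq.1.2, hq.2⟩
  have cz : ContDiffOn ℝ 1 (fun q : (ℝ × ℝ) × ℝ => z q.1.1 q.1.2 q.2) B :=
    hzC1.comp hmap.contDiffOn hmaps
  have czi : ∀ i, ContDiffOn ℝ 1 (fun q : (ℝ × ℝ) × ℝ => zi i q.1.1 q.1.2 q.2) B :=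
    fun i => (hziC1 i).comp hmap.contDiffOn hmaps
  have cz0 : ContDiffOn ℝ 1 (fun q : (ℝ × ℝ) × ℝ => z₀ q.1.1 q.1.2 q.2) B :=
    cz.sub (ContDiffOn.sum fun i _ => czi i)
  have cp : ContDiffOn ℝ 1 (fun q : (ℝ × ℝ) × ℝ => p q.1) B :=
    (hp.comp contDiff_fst).contDiffOn
  have cw : ContDiffOn ℝ 1 w B :=
    cp.mul ((contDiffOn_quad K₀ cz0).add
      (ContDiffOn.sum fun i _ => contDiffOn_quad (K i) (czi i)))
  have ch : ContinuousOn h B :=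
    continuousOn_const.mul (cp.continuousOn.mul (continuousOn_dot K₀ cz0.continuousOn hvb)).neg
  have hU : UniqueDiffOn ℝ B :=
    ((uniqueDiffOn_Icc (by linarith)).prod (uniqueDiffOn_Icc (by linarith))).prod
      (uniqueDiffOn_Icc hS)
  have cF : ContinuousOn (fderivWithin ℝ w B) B := cw.continuousOn_fderivWithin hU le_rfl
  have hF : ∀ q ∈ B, HasFDerivWithinAt w (fderivWithin ℝ w B q) B q := fun q hq =>
    (cw.differentiableOn one_ne_zero q hq).hasFDerivWithinAt
  have hds : ∀ q ∈ Q, ∀ t ∈ Set.Ioo 0 S,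
      HasDerivAt (fun t => w (q, t)) (fderivWithin ℝ w B (q, t) ((0, 0), 1)) t := by
    intro q hq t ht
    have hl : HasDerivWithinAt (fun t : ℝ => (q, t)) (((0, 0), 1) : (ℝ × ℝ) × ℝ)
        (Set.Icc 0 S) t :=
      (hasDerivWithinAt_const t _ q).prodMk (hasDerivWithinAt_id t _)
    exact ((hF (q, t) ⟨hq, Set.Ioo_subset_Icc_self ht⟩).comp_hasDerivWithinAt t hl
      (fun t ht => (⟨hq, ht⟩ : (q, t) ∈ B))).hasDerivAt (Icc_mem_nhds ht.1 ht.2)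
  have hdx : ∀ y ∈ Set.Icc (-b) b, ∀ t ∈ Set.Icc 0 S, ∀ x ∈ Set.Ioo (-a) a,
      HasDerivAt (fun x => w ((x, y), t)) (fderivWithin ℝ w B ((x, y), t) ((1, 0), 0)) x := by
    intro y hy t ht x hx
    have hl : HasDerivWithinAt (fun x : ℝ => ((x, y), t)) (((1, 0), 0) : (ℝ × ℝ) × ℝ)
        (Set.Icc (-a) a) x :=
      ((hasDerivWithinAt_id x _).prodMk (hasDerivWithinAt_const x _ y)).prodMk
        (hasDerivWithinAt_const x _ t)
    exact ((hF ((x, y), t) ⟨⟨Set.Ioo_subset_Icc_self hx, hy⟩, ht⟩).comp_hasDerivWithinAt x hl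
      (fun x hx => (⟨⟨hx, hy⟩, ht⟩ : ((x, y), t) ∈ B))).hasDerivAt (Icc_mem_nhds hx.1 hx.2)
  have cWs : ContinuousOn (fun q => fderivWithin ℝ w B q ((0, 0), 1)) B :=
    cF.clm_apply continuousOn_const
  have cWx : ContinuousOn (fun q => fderivWithin ℝ w B q ((1, 0), 0)) B :=
    cF.clm_apply continuousOn_const
  have hquad : ∀ x y t, 0 ≤ (z₀ x y t ⬝ᵥ K₀.mulVec (z₀ x y t)) +
          ∑ i, zi i x y t ⬝ᵥ (K i).mulVec (zi i x y t) := fun x y t =>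
    add_nonneg (pos_dot hK₀ _) (Finset.sum_nonneg fun i _ => pos_dot (hK i) _)
  have hint : ∀ q ∈ (Set.Ioo (-a) a ×ˢ Set.Ioo (-b) b) ×ˢ Set.Ioo 0 S,
      fderivWithin ℝ w B q ((0, 0), 1) ≤ h q + fderivWithin ℝ w B q ((1, 0), 0) := by
    rintro ⟨⟨x, y⟩, t⟩ ⟨⟨hx, hy⟩, ht⟩
    simp only at hx hy ht
    have hxy : (x, y) ∈ Q := ⟨Set.Ioo_subset_Icc_self hx, Set.Ioo_subset_Icc_self hy⟩
    have htI := Set.Ioo_subset_Icc_self ht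
    have s0 : HasDerivAt (fun t => z₀ x y t) (zs x y t - ∑ i, zis i x y t) t :=
      (hzs x hx y hy t ht).sub (HasDerivAt.fun_sum fun i _ => hzis i x hx y hy t ht)
    have x0 : HasDerivAt (fun x => z₀ x y t) (zx x y t - ∑ i, zix i x y t) x :=
      (hzx x hx y hy t ht).sub (HasDerivAt.fun_sum fun i _ => hzix i x hx y hy t ht)
    have dp : HasDerivAt (fun x => p (x, y)) (deriv (fun x => p (x, y)) x) x := by
      have : DifferentiableAt ℝ p (x, y) := (hp.differentiable one_ne_zero) _
      refine DifferentiableAt.hasDerivAt ?_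
      exact this.comp x (by fun_prop : DifferentiableAt ℝ (fun x : ℝ => (x, y)) x)
    have ds := ((hasDerivAt_quad hK₀ s0).add (HasDerivAt.fun_sum (u := Finset.univ) fun i _ =>
      hasDerivAt_quad (hK i) (hzis i x hx y hy t ht))).const_mul (p (x, y))
    have dx := dp.mul ((hasDerivAt_quad hK₀ x0).add (HasDerivAt.fun_sum (u := Finset.univ)
      fun i _ => hasDerivAt_quad (hK i) (hzix i x hx y hy t ht)))
    rw [(hds (x, y) hxy t ht).unique ds,
      (hdx y hxy.2 t htI x hx).unique dx]
    have hD := diss (K₀ := K₀) (K := K) hC (hMm (Vr t • vb x y t))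
      (r := regNorm ε ((Mm (Vr t • vb x y t)).mulVec (Vr t • vb x y t)))
      (V := (Vr t)⁻¹) (Real.sqrt_nonneg _)
      (inv_nonneg.2 (hVmin.le.trans (hVr t htI)))
      (z₀ x y t) (vb x y t) (zs x y t - zx x y t) (fun i => zi i x y t)
      (fun i => zis i x y t - zix i x y t)
      (hPDEz x hx y hy t ht) (fun i => hPDEzi i x hx y hy t ht)
    have h1 := mul_le_mul_of_nonneg_left hD (hp0 _ hxy)
    have h2 := mul_nonneg (hpx _ hxy) (hquad x y t)
    simp only [h, Pi.add_apply, dotProduct_sub, dotProduct_sum, Finset.sum_sub_distrib,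
      ← Finset.mul_sum] at h1 h2 ⊢
    linarith
  have hle : ∀ q ∈ B,
      fderivWithin ℝ w B q ((0, 0), 1) ≤ h q + fderivWithin ℝ w B q ((1, 0), 0) := by
    intro q hq
    have hcl : q ∈ closure ((Set.Ioo (-a) a ×ˢ Set.Ioo (-b) b) ×ˢ Set.Ioo 0 S) := by
      rw [closure_prod_eq, closure_prod_eq, closure_Ioo (by linarith), closure_Ioo (by linarith),
        closure_Ioo hS.ne]
      exact hq
    have hsub : (Set.Ioo (-a) a ×ˢ Set.Ioo (-b) b) ×ˢ Set.Ioo 0 S ⊆ B :=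
      Set.prod_mono (Set.prod_mono Set.Ioo_subset_Icc_self Set.Ioo_subset_Icc_self)
        Set.Ioo_subset_Icc_self
    exact ContinuousWithinAt.closure_le hcl ((cWs q hq).mono hsub)
      (((ch.add cWx) q hq).mono hsub) hint
  have main := scalar_ineq ha hs w _ _ h cw.continuousOn cWs cWx ch hds hdx hle
    (fun y hy t ht => by simp [w, z₀, hBCz y hy t ht, fun i => hBCzi i y hy t ht])
    (fun y hy t ht => mul_nonneg (hp0 _ ⟨⟨le_rfl, by linarith⟩, hy⟩) (hquad _ _ _))
  simp only [h, integral_const_mul, intervalIntegral.integral_const_mul, integral_neg] at main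
  simp only [W]
  simp only [w] at main
  linarith
end
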